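/- arXiv:0810.0118 — 2 statements merged into one kernel-verified Lean document; each statement's English description precedes it below -/
import Mathlib

section
/- Let n be a natural number and let M be an abelian group equipped with an action of the free abelian group ℤⁿ by group automorphisms. Then the n-th group cohomology Hⁿ(ℤⁿ, M) is isomorphic, as an abelian group, to the coinvariants M_{ℤⁿ}. -/
/-!
Let `F_S` be the representation of functions `G → M` that are invariant under translation by
elements of `S ⊆ G`. The restriction from `F_S` to `F_{S ∪ {a}}` is the kernel of the difference
operator `f ↦ f (· * a) - f` on `F_S`, and this operator is onto when `a` is independent of `S`,
because every function on `ℤ` has an antidifference. The long exact sequence therefore raises the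
degree by one and kills the image of `shift a - 1`. Carrying along how the translations act on
cohomology, one finds inductively that the top cohomology of `F_S` is `M / ∑_{s ∈ S} (s - 1) M`
in degree `|S|`. The induction starts with the coinduced module `F_∅` and ends with `F_S ≅ M` when
`S` generates `G`.
-/

open CategoryTheory Representation

universe u

lemma exists_forall_add_one_sub_eq {M : Type*} [AddCommGroup M] (u : ℤ → M) :
    ∃ v : ℤ → M, ∀ m, v (m + 1) - v m = u m := by
  refine ⟨fun m ↦ ∑ i ∈ Finset.range m.toNat, u i -
    ∑ i ∈ Finset.range (-m).toNat, u (-(i + 1 : ℕ)), fun m ↦ ?_⟩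
  cases m with
  | ofNat m =>
    have h₁ : ((m : ℤ) + 1).toNat = m + 1 := by omega
    have h₂ : (-((m : ℤ) + 1)).toNat = 0 := by omega
    simp [-neg_add_rev, h₁, h₂, Finset.sum_range_succ]
  | negSucc m =>
    have h₁ : (Int.negSucc m + 1).toNat = 0 := by omega
    have h₂ : (-(Int.negSucc m + 1)).toNat = m := by omega
    simp only [h₁, h₂, Int.toNat_negSucc, Int.neg_negSucc, Int.toNat_natCast,
      Finset.sum_range_succ]
    simp [Int.negSucc_eq]

section Coinvariants

variable {k G M : Type*} [CommRing k] [Group G] [AddCommGroup M] [Module k M]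
  (ρ : Representation k G M)

lemma iSup_range_sub_one_eq_coinvariantsKer {S : Set G} (hS : Subgroup.closure S = ⊤) :
    ⨆ g ∈ S, (ρ g - 1).range = Coinvariants.ker ρ := by
  set K := ⨆ g ∈ S, (ρ g - 1).range
  apply le_antisymm
  · refine iSup₂_le fun g _ ↦ ?_
    rintro _ ⟨m, rfl⟩
    exact Coinvariants.sub_mem_ker g m
  · have sub_mem (g : G) : ∀ m, ρ g m - m ∈ K := by
      induction (hS ▸ Subgroup.mem_top g : g ∈ Subgroup.closure S) using
        Subgroup.closure_induction with
      | mem g hg =>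
        exact fun m ↦ Submodule.mem_iSup_of_mem g (Submodule.mem_iSup_of_mem hg ⟨m, rfl⟩)
      | one => simp
      | mul g h _ _ hg hh =>
        intro m
        simpa using add_mem (hg (ρ h m)) (hh m)
      | inv g _ hg =>
        intro m
        simpa using neg_mem (hg (ρ g⁻¹ m))
    rw [Coinvariants.ker, Submodule.span_le]
    rintro _ ⟨⟨g, m⟩, rfl⟩
    exact sub_mem g m

lemma toAddSubgroup_coinvariantsKer :
    (Coinvariants.ker ρ).toAddSubgroup =
      AddSubgroup.closure {x : M | ∃ (m : M) (g : G), x = m - ρ g m} := by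
  apply le_antisymm
  · intro x hx
    induction hx using Submodule.closure_induction with
    | zero => exact zero_mem _
    | add x y _ _ hx hy => exact add_mem hx hy
    | smul_mem c x hx =>
      obtain ⟨⟨g, m⟩, rfl⟩ := hx
      refine AddSubgroup.subset_closure ⟨-(c • m), g, ?_⟩
      simp only [map_neg, map_smul, smul_sub]
      abel
  · rw [AddSubgroup.closure_le]
    rintro _ ⟨m, g, rfl⟩
    rw [← neg_sub]
    exact neg_mem (Coinvariants.sub_mem_ker g m)

/-- The coinvariants of a linear representation, a quotient by a submodule, as the quotient by the
additive subgroup generated by the differences `m - g • m`. -/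
def coinvariantsAddEquiv :
    ρ.Coinvariants ≃+ M ⧸ AddSubgroup.closure {x : M | ∃ (m : M) (g : G), x = m - ρ g m} :=
  QuotientAddGroup.quotientAddEquivOfEq (toAddSubgroup_coinvariantsKer ρ)

end Coinvariants

section GroupCohomology

variable {k G : Type u} [CommRing k] [Group G]

instance groupCohomologyFunctor_additive (d : ℕ) : (groupCohomology.functor k G d).Additive :=
  inferInstanceAs (groupCohomology.cochainsFunctor k G ⋙
    HomologicalComplex.homologyFunctor (ModuleCat k) _ d).Additive

lemma ker_δ_eq_range_map {X : ShortComplex (Rep k G)} (hX : X.ShortExact) (d : ℕ) :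
    (groupCohomology.δ hX d (d + 1) rfl).hom.ker =
      ((groupCohomology.functor k G d).map X.g).hom.range :=
  (groupCohomology.mapShortComplex₃_exact hX rfl).moduleCat_range_eq_ker.symm

end GroupCohomology

section ShiftInvariants

variable {k G M : Type*} [CommRing k] [AddCommGroup M] [Module k M]

variable (k M) in
/-- The module `F_S` of functions `G → M` invariant under right translation by elements of `S`. -/
def shiftInvariants [Mul G] (S : Set G) : Submodule k (G → M) where
  carrier := {f | ∀ s ∈ S, ∀ x, f (x * s) = f x}
  add_mem' hf hg s hs x := by simp only [Pi.add_apply, hf s hs, hg s hs]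
  zero_mem' _ _ _ := rfl
  smul_mem' c f hf s hs x := by simp only [Pi.smul_apply, hf s hs]

variable [Group G] (ρ : Representation k G M) (S : Set G)

/-- The diagonal action `(g • f) x = g • f (g⁻¹ * x)` on `F_S`. With this action the constant
functions form a copy of `M`. -/
def shiftInvariantsRep : Representation k G (shiftInvariants k M S) where
  toFun g :=
    { toFun f := ⟨fun x ↦ ρ g (f.1 (g⁻¹ * x)), fun s hs x ↦ by
        simp only [← mul_assoc, f.2 s hs]⟩
      map_add' f₁ f₂ := by ext; simp
      map_smul' c f := by ext; simp }
  map_one' := by ext; simp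
  map_mul' g h := by ext; simp [mul_assoc]

variable {S} in
lemma shiftInvariants_apply_mul (f : shiftInvariants k M S) {g : G} (hg : g ∈ Subgroup.closure S) :
    ∀ x, f.1 (x * g) = f.1 x := by
  induction hg using Subgroup.closure_induction with
  | mem s hs => exact f.2 s hs
  | one => simp
  | mul g h _ _ hg hh => exact fun x ↦ by rw [← mul_assoc, hh, hg]
  | inv g _ hg => exact fun x ↦ by rw [← hg, inv_mul_cancel_right]

variable {S} in
/-- Evaluation at `1` identifies `F_S` with `M` when `S` generates `G`. -/
def shiftInvariantsEquivOfClosureEqTop (hS : Subgroup.closure S = ⊤) :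
    (shiftInvariantsRep ρ S).Equiv ρ :=
  have apply_eq (f : shiftInvariants k M S) (x : G) : f.1 x = f.1 1 := by
    simpa using shiftInvariants_apply_mul f (hS ▸ Subgroup.mem_top x) 1
  .mk
    { toFun f := f.1 1
      invFun m := ⟨fun _ ↦ m, fun _ _ _ ↦ rfl⟩
      map_add' _ _ := rfl
      map_smul' _ _ := rfl
      left_inv f := Subtype.ext (funext fun x ↦ (apply_eq f x).symm)
      right_inv _ := rfl } fun g ↦ by
    ext f
    simp [shiftInvariantsRep, apply_eq f g⁻¹]

end ShiftInvariants

section CoindClosure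

variable {k G M : Type u} [CommRing k] [Group G] [AddCommGroup M] [Module k M]
  (ρ : Representation k G M)

/-- `F_S` with its diagonal action, as an object of `Rep k G`: up to the untwisting
`f ↦ (x ↦ x • f x⁻¹)`, the restriction of `M` to the subgroup generated by `S`, coinduced back to
`G`. -/
noncomputable abbrev coindClosure (S : Set G) : Rep k G := Rep.of (shiftInvariantsRep ρ S)

/-- Untwisting the diagonal action identifies `F_∅` with the module coinduced from the trivial
subgroup. -/
noncomputable def coindClosureEmptyIso : coindClosure ρ ∅ ≅
    Rep.coind (⊥ : Subgroup G).subtype (Rep.trivial k (⊥ : Subgroup G) M) :=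
  Rep.mkIso <| .mk
    { toFun f := ⟨fun x ↦ ρ x (f.1 x⁻¹), fun ⟨g, hg⟩ h ↦ by
        obtain rfl := Subgroup.mem_bot.1 hg
        simp⟩
      invFun f := ⟨fun x ↦ ρ x (f.1 x⁻¹), fun s hs ↦ hs.elim⟩
      map_add' _ _ := Subtype.ext (funext fun x ↦ map_add (ρ x) _ _)
      map_smul' c _ := Subtype.ext (funext fun x ↦ map_smul (ρ x) c _)
      left_inv f := by ext; simp
      right_inv f := by ext; simp } fun g ↦ by
    ext f x
    change ρ x (ρ g (f.1 (g⁻¹ * x⁻¹))) = ρ (x * g) (f.1 (x * g)⁻¹)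
    simp

lemma isZero_groupCohomology_coindClosure_empty (d : ℕ) :
    Limits.IsZero (groupCohomology (coindClosure ρ ∅) (d + 1)) :=
  (isZero_groupCohomology_succ_of_subsingleton
    (Rep.trivial k (⊥ : Subgroup G) M) d).of_iso <|
  (groupCohomology.functor k G (d + 1)).mapIso (coindClosureEmptyIso ρ) ≪≫
    groupCohomology.coindIso _ _

/-- The `G`-invariant functions in `F_∅` are the orbit maps `x ↦ x • m`. -/
def orbitMapEquiv : M ≃ₗ[k] (coindClosure ρ ∅).ρ.invariants where
  toFun m := ⟨⟨fun x ↦ ρ x m, fun _ hs ↦ hs.elim⟩, fun g ↦ by ext; simp [shiftInvariantsRep]⟩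
  invFun f := f.1.1 1
  map_add' _ _ := by ext; simp
  map_smul' _ _ := by ext; simp
  left_inv m := by simp
  right_inv f := by
    ext x
    simpa [shiftInvariantsRep] using congrFun (congrArg Subtype.val (f.2 x)) x

end CoindClosure

section Shift

variable {k G M : Type u} [CommRing k] [CommGroup G] [AddCommGroup M] [Module k M]
  (ρ : Representation k G M) (S : Set G)

/-- Translation by `a`, as an endomorphism of the representation `F_S`. -/
def shift (a : G) : coindClosure ρ S ⟶ coindClosure ρ S := Rep.ofHom
  { toFun f := ⟨fun x ↦ f.1 (x * a), fun s hs x ↦ by simp only [mul_right_comm x s a, f.2 s hs]⟩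
    map_add' _ _ := rfl
    map_smul' _ _ := rfl
    isIntertwining' g := by ext f x; simp [shiftInvariantsRep, mul_assoc] }

lemma shift_sub_id_surjective {a : G} (c : G →* Multiplicative ℤ) (hc : c a = .ofAdd 1)
    (hS : ∀ s ∈ S, c s = 1) : Function.Surjective (shift ρ S a - 𝟙 _).hom := by
  intro h
  choose v hv using exists_forall_add_one_sub_eq (M := M)
  let fibre (x : G) (m : ℤ) : M := h.1 (x * a ^ (m - (c x).toAdd))
  have fibre_mul_self (x : G) : fibre (x * a) = fibre x := by
    funext m
    simp only [fibre, map_mul, hc, toAdd_mul, toAdd_ofAdd]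
    rw [mul_assoc, ← zpow_one_add, add_comm 1, sub_add_eq_sub_sub, sub_add_cancel]
  have fibre_mul (s) (hs : s ∈ S) (x : G) : fibre (x * s) = fibre x := by
    funext m
    simp only [fibre, map_mul, hS s hs, mul_one]
    rw [mul_right_comm, h.2 s hs]
  refine ⟨⟨fun x ↦ v (fibre x) (c x).toAdd, fun s hs x ↦ ?_⟩,
    Subtype.ext (funext fun x ↦ ?_)⟩
  · simp only [fibre_mul s hs, map_mul, hS s hs, mul_one]
  · calc v (fibre (x * a)) (c (x * a)).toAdd - v (fibre x) (c x).toAdd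
      _ = fibre x (c x).toAdd := by
        rw [fibre_mul_self, map_mul, hc, toAdd_mul, toAdd_ofAdd, hv]
      _ = h.1 x := by simp [fibre]

/-- The sequence `F_{S ∪ {a}} → F_S → F_S` of the inclusion and the difference operator
`f ↦ f (· * a) - f`. -/
noncomputable abbrev differenceComplex (a : G) : ShortComplex (Rep k G) where
  X₁ := coindClosure ρ (insert a S)
  X₂ := coindClosure ρ S
  X₃ := coindClosure ρ S
  f := Rep.ofHom
    { toFun f := ⟨f.1, fun s hs ↦ f.2 s (.inr hs)⟩
      map_add' _ _ := rfl
      map_smul' _ _ := rfl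
      isIntertwining' _ := rfl }
  g := shift ρ S a - 𝟙 _
  zero := by
    ext f : 3
    exact Subtype.ext (funext fun x ↦ sub_eq_zero.2 (f.2 a (Set.mem_insert a S) x))

/-- Translation by `b` as an endomorphism of the difference sequence. -/
def differenceComplexShift (a b : G) : differenceComplex ρ S a ⟶ differenceComplex ρ S a where
  τ₁ := shift ρ _ b
  τ₂ := shift ρ _ b
  τ₃ := shift ρ _ b
  comm₁₂ := rfl
  comm₂₃ := by
    ext f : 3
    refine Subtype.ext (funext fun x ↦ ?_)
    exact congrArg (f.1 · - f.1 (x * b)) (mul_right_comm x a b)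

/-- The action on `Hᵈ(G, F_S)` of translation by `g`. -/
noncomputable def cohomologyShift (d : ℕ) (g : G) :
    Module.End k (groupCohomology (coindClosure ρ S) d) :=
  (groupCohomology.map (MonoidHom.id G) (shift ρ S g) d).hom

variable {ρ S} {a : G} (ha : Function.Surjective (shift ρ S a - 𝟙 _).hom)

include ha in
lemma differenceComplex_shortExact : (differenceComplex ρ S a).ShortExact where
  exact := by
    rw [← ShortComplex.exact_map_iff_of_faithful _ (forget₂ (Rep k G) (ModuleCat k)),
      ShortComplex.moduleCat_exact_iff]
    intro f hf
    refine ⟨⟨f.1, Set.forall_mem_insert .. |>.2 ⟨fun x ↦ ?_, f.2⟩⟩, rfl⟩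
    exact sub_eq_zero.1 (congrFun (congrArg Subtype.val hf) x)
  mono_f := (Rep.mono_iff_injective _).2 fun f₁ f₂ h ↦
    Subtype.ext (congrArg (Subtype.val : shiftInvariants k M S → G → M) h)
  epi_g := (Rep.epi_iff_surjective _).2 ha

/-- The connecting map `Hᵈ(G, F_S) → Hᵈ⁺¹(G, F_{S ∪ {a}})` of the difference sequence. -/
noncomputable def connectingMap (d : ℕ) :
    groupCohomology (coindClosure ρ S) d →ₗ[k]
      groupCohomology (coindClosure ρ (insert a S)) (d + 1) :=
  (groupCohomology.δ (differenceComplex_shortExact ha) d (d + 1) rfl).hom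

lemma ker_connectingMap (d : ℕ) :
    (connectingMap ha d).ker = (cohomologyShift ρ S d a - 1).range := by
  have map_sub_id : (groupCohomology.functor k G d).map (shift ρ S a - 𝟙 _) =
      (groupCohomology.functor k G d).map (shift ρ S a) - 𝟙 _ := by
    rw [Functor.map_sub, CategoryTheory.Functor.map_id]
  exact (ker_δ_eq_range_map (differenceComplex_shortExact ha) d).trans
    (congrArg (fun f ↦ f.hom.range) map_sub_id)

lemma cohomologyShift_comp_connectingMap (d : ℕ) (g : G) :
    cohomologyShift ρ (insert a S) (d + 1) g ∘ₗ connectingMap ha d =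
      connectingMap ha d ∘ₗ cohomologyShift ρ S d g :=
  congrArg ModuleCat.Hom.hom
    (groupCohomology.δ_naturality _ _ (differenceComplexShift ρ S a g) d (d + 1) rfl)

end Shift

section TopCohomology

variable {k G M : Type u} [CommRing k] [CommGroup G] [AddCommGroup M] [Module k M]
  {ρ : Representation k G M} {S : Set G}

variable (ρ S) in
/-- `d` bounds the degrees in which `F_S` has nonzero cohomology, and `π` presents `Hᵈ(G, F_S)` as
`M / ∑_{s ∈ S} (s - 1) M`. The induction on `S` needs that `π` turns the action of `G` on `M` into
the action by translations on cohomology. -/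
structure IsTopCohomologyMap (d : ℕ) (π : M →ₗ[k] groupCohomology (coindClosure ρ S) d) :
    Prop where
  isZero_of_lt : ∀ e, d < e → Limits.IsZero (groupCohomology (coindClosure ρ S) e)
  surjective : Function.Surjective π
  ker_eq : π.ker = ⨆ g ∈ S, (ρ g - 1).range
  shift_comp : ∀ g : G, cohomologyShift ρ S d g ∘ₗ π = π ∘ₗ ρ g

variable (ρ) in
lemma isTopCohomologyMap_empty : IsTopCohomologyMap ρ ∅ 0
    ((orbitMapEquiv ρ).trans (groupCohomology.H0Iso _).toLinearEquiv.symm).toLinearMap where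
  isZero_of_lt
    | e + 1, _ => isZero_groupCohomology_coindClosure_empty ρ e
  surjective := LinearEquiv.surjective _
  ker_eq := by simp
  shift_comp g := by
    ext m
    let e := (groupCohomology.H0Iso (coindClosure ρ ∅)).toLinearEquiv
    apply e.injective
    calc e (cohomologyShift ρ ∅ 0 g (e.symm (orbitMapEquiv ρ m)))
      _ = ((Rep.invariantsFunctor k G).map (shift ρ ∅ g)).hom (e (e.symm (orbitMapEquiv ρ m))) :=
        groupCohomology.map_id_comp_H0Iso_hom_apply (shift ρ ∅ g) _
      _ = ((Rep.invariantsFunctor k G).map (shift ρ ∅ g)).hom (orbitMapEquiv ρ m) := by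
        rw [e.apply_symm_apply]
      _ = orbitMapEquiv ρ (ρ g m) :=
        Subtype.ext (Subtype.ext (funext fun x ↦ LinearMap.congr_fun (map_mul ρ x g) m))
      _ = e (e.symm (orbitMapEquiv ρ (ρ g m))) := (e.apply_symm_apply _).symm

lemma IsTopCohomologyMap.connectingMap_comp {d : ℕ}
    {π : M →ₗ[k] groupCohomology (coindClosure ρ S) d} (hπ : IsTopCohomologyMap ρ S d π) {a : G}
    (ha : Function.Surjective (shift ρ S a - 𝟙 _).hom) :
    IsTopCohomologyMap ρ (insert a S) (d + 1) (connectingMap ha d ∘ₗ π) where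
  isZero_of_lt
    | e + 1, he =>
      (groupCohomology.mapShortComplex₁_exact (differenceComplex_shortExact ha) rfl).isZero_X₂
        ((hπ.isZero_of_lt e (by omega)).eq_of_src _ _)
        ((hπ.isZero_of_lt (e + 1) (by omega)).eq_of_tgt _ _)
  surjective := by
    have := groupCohomology.epi_δ_of_isZero (differenceComplex_shortExact ha) d
      (hπ.isZero_of_lt _ (by omega))
    exact ((ModuleCat.epi_iff_surjective _).1 this).comp hπ.surjective
  ker_eq := calc
    _ = (cohomologyShift ρ S d a - 1).range.comap π := by
      rw [LinearMap.ker_comp, ker_connectingMap]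
    _ = ((cohomologyShift ρ S d a - 1) ∘ₗ π).range.comap π := by
      rw [LinearMap.range_comp_of_range_eq_top _ (LinearMap.range_eq_top.2 hπ.surjective)]
    _ = (π ∘ₗ (ρ a - 1)).range.comap π := by
      rw [LinearMap.sub_comp, hπ.shift_comp, LinearMap.comp_sub]; rfl
    _ = ⨆ g ∈ insert a S, (ρ g - 1).range := by
      rw [LinearMap.range_comp, Submodule.comap_map_eq, hπ.ker_eq, iSup_insert]
  shift_comp g := by
    rw [← LinearMap.comp_assoc, cohomologyShift_comp_connectingMap, LinearMap.comp_assoc,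
      hπ.shift_comp, LinearMap.comp_assoc]

lemma IsTopCohomologyMap.nonempty_linearEquiv_coinvariants {d : ℕ}
    {π : M →ₗ[k] groupCohomology (coindClosure ρ S) d} (hπ : IsTopCohomologyMap ρ S d π)
    (hS : Subgroup.closure S = ⊤) :
    Nonempty (groupCohomology (Rep.of ρ) d ≃ₗ[k] ρ.Coinvariants) :=
  have ker_eq : π.ker = Coinvariants.ker ρ :=
    hπ.ker_eq.trans (iSup_range_sub_one_eq_coinvariantsKer ρ hS)
  ⟨((groupCohomology.functor k G d).mapIso
      (Rep.mkIso (shiftInvariantsEquivOfClosureEqTop ρ hS))).toLinearEquiv.symm ≪≫ₗ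
    (π.quotKerEquivOfSurjective hπ.surjective).symm ≪≫ₗ Submodule.quotEquivOfEq _ _ ker_eq⟩

end TopCohomology

section FreeAbelian

/-- The `i`-th standard generator of the free abelian group on `ι`, written multiplicatively. -/
def freeGenerator {ι : Type*} [DecidableEq ι] (i : ι) : Multiplicative (ι → ℤ) :=
  .ofAdd (Pi.single i 1)

lemma closure_range_freeGenerator_eq_top (ι : Type*) [Finite ι] [DecidableEq ι] :
    Subgroup.closure (Set.range (freeGenerator (ι := ι))) = ⊤ := by
  cases nonempty_fintype ι
  refine (Subgroup.eq_top_iff' _).2 fun γ ↦ ?_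
  have eq_prod : γ = ∏ i, freeGenerator i ^ γ.toAdd i := by
    refine Multiplicative.toAdd.injective (funext fun l ↦ ?_)
    simp [freeGenerator, toAdd_prod, Pi.single_apply]
  rw [eq_prod]
  exact Subgroup.prod_mem _ fun i _ ↦
    Subgroup.zpow_mem _ (Subgroup.subset_closure (Set.mem_range_self i)) _

variable {k ι M : Type u} [CommRing k] [AddCommGroup M] [Module k M]
  (ρ : Representation k (Multiplicative (ι → ℤ)) M)

lemma exists_isTopCohomologyMap_image_freeGenerator [DecidableEq ι] (s : Finset ι) :
    ∃ π, IsTopCohomologyMap ρ (freeGenerator '' s) s.card π := by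
  induction s using Finset.induction_on with
  | empty =>
    rw [Finset.coe_empty, Set.image_empty, Finset.card_empty]
    exact ⟨_, isTopCohomologyMap_empty ρ⟩
  | insert j s hj ih =>
    obtain ⟨π, hπ⟩ := ih
    let coord : Multiplicative (ι → ℤ) →* Multiplicative ℤ :=
      (Pi.evalAddMonoidHom (fun _ : ι ↦ ℤ) j).toMultiplicative
    have coord_self : coord (freeGenerator j) = .ofAdd 1 := by simp [coord, freeGenerator]
    have coord_of_mem : ∀ g ∈ freeGenerator '' (s : Set ι), coord g = 1 := by
      rintro _ ⟨i, hi, rfl⟩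
      have hji : j ≠ i := by rintro rfl; exact hj hi
      simp [coord, freeGenerator, Pi.single_eq_of_ne hji]
    rw [Finset.card_insert_of_notMem hj, Finset.coe_insert, Set.image_insert_eq]
    exact ⟨_, hπ.connectingMap_comp (shift_sub_id_surjective ρ _ coord coord_self coord_of_mem)⟩

theorem groupCohomology_top_degree_isom_coinvariants_general [Fintype ι] :
    Nonempty (groupCohomology (Rep.of ρ) (Fintype.card ι) ≃ₗ[k] ρ.Coinvariants) := by
  classical
  obtain ⟨π, hπ⟩ := exists_isTopCohomologyMap_image_freeGenerator ρ Finset.univ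
  refine hπ.nonempty_linearEquiv_coinvariants ?_
  rw [Finset.coe_univ, Set.image_univ, closure_range_freeGenerator_eq_top]

end FreeAbelian

/-- For an abelian group `M` equipped with an action of `ℤⁿ` by group
automorphisms (formalized as a `ℤ`-linear representation `ρ` of the free abelian group
`ℤⁿ`, written multiplicatively), the `n`-th group cohomology `Hⁿ(ℤⁿ, M)` is isomorphic,
as an abelian group, to the coinvariants `M_{ℤⁿ}`, i.e. the quotient of `M` by the
subgroup generated by all elements `m - γ • m`. -/
theorem groupCohomology_top_degree_isom_coinvariants (n : ℕ) (M : Type) [AddCommGroup M]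
    [Module ℤ M] (ρ : Representation ℤ (Multiplicative (Fin n → ℤ)) M) :
    Nonempty ((groupCohomology (Rep.of ρ) n) ≃+
      (M ⧸ AddSubgroup.closure {x : M | ∃ (m : M) (γ : Multiplicative (Fin n → ℤ)),
        x = m - ρ γ m})) := by
  obtain ⟨e⟩ := Fintype.card_fin n ▸ groupCohomology_top_degree_isom_coinvariants_general ρ
  -- Otherwise instance search finds the canonical `ℤ`-module structure, which is not defeq to
  -- the one carried by `e`.
  let _ := Coinvariants.instModule ρ
  exact ⟨e.toAddEquiv.trans (coinvariantsAddEquiv ρ)⟩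
end

section
/- Let n be a natural number and let M be an abelian group equipped with an action of the free abelian group ℤⁿ by group automorphisms. Then for every k > n the group cohomology H^k(ℤⁿ, M) is the trivial group. -/
/-!
Let `N` be the kernel of a surjection `G → ℤ` and let `t ∈ G` map to `1`. For a `G`-module `M`,
sending `Φ` to `g ↦ g⁻¹ Φ(g)` identifies `Coind_N^G M` with the functions `ℤ → M`. On these, the
forward difference `φ(m + 1) - φ(m)` is `G`-equivariant and surjective, with kernel the constant
functions, so that `0 → M → Coind_N^G M → Coind_N^G M → 0` is exact. By Shapiro's lemma the
cohomology of the last two terms is that of `N`, and the long exact sequence shows that the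
cohomological dimension of `G` exceeds that of `N` by at most one. Split off one copy of `ℤ` at
a time.
-/

open CategoryTheory Limits

universe u

lemma surjective_fwdDiff_one_int {M : Type*} [AddCommGroup M] :
    Function.Surjective (fwdDiff 1 : (ℤ → M) → ℤ → M) := by
  intro w
  refine ⟨fun m ↦ m.inductionOn' 0 0 (fun k _ x ↦ x + w k) (fun k _ x ↦ x - w (k - 1)), ?_⟩
  ext m
  rcases le_or_gt 0 m with hm | hm
  · simp only [fwdDiff, Int.inductionOn'_add_one hm, add_sub_cancel_left]
  · have hsub := Int.inductionOn'_sub_one (motive := fun _ ↦ M) (zero := 0)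
      (succ := fun k _ x ↦ x + w k) (pred := fun k _ x ↦ x - w (k - 1)) (Int.add_one_le_of_lt hm)
    rw [add_sub_cancel_right] at hsub
    rw [fwdDiff, hsub, sub_sub_cancel]

lemma ker_sup_zpowers_eq_top {G H : Type*} [Group G] [Group H] (χ : G →* H) {t : G}
    (ht : Subgroup.zpowers (χ t) = ⊤) : χ.ker ⊔ Subgroup.zpowers t = ⊤ := by
  rw [sup_comm, ← Subgroup.comap_map_eq, MonoidHom.map_zpowers, ht, Subgroup.comap_top]

lemma zpowers_ofAdd_one_eq_top :
    Subgroup.zpowers (Multiplicative.ofAdd (1 : ℤ)) = ⊤ :=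
  eq_top_iff.2 fun x _ ↦ ⟨x.toAdd, by simp [← ofAdd_zsmul]⟩

section Coinduction

variable {R G M : Type*} [Semiring R] [Group G] [AddCommGroup M] [Module R M]
  (ρ : Representation R G M)

/-- The elements of `G` with respect to which `f : G → M` is equivariant, `G` acting on itself by
left translations. -/
def equivarianceSubgroup (f : G → M) : Subgroup G where
  carrier := {h | ∀ g, f (h * g) = ρ h (f g)}
  one_mem' g := by simp
  mul_mem' {a b} ha hb g := by rw [mul_assoc, ha, hb, map_mul, Module.End.mul_apply]
  inv_mem' {a} ha g := by rw [← ρ.inv_self_apply a (f (a⁻¹ * g)), ← ha, mul_inv_cancel_left]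

variable (S : Subgroup G)

/-- The unit `M → Coind_S^G M`, `a ↦ (g ↦ g a)`, of the adjunction between restriction to `S` and
coinduction from `S`. -/
def coindUnit : ρ.IntertwiningMap (Representation.coind S.subtype (ρ.comp S.subtype)) where
  toFun a := ⟨fun g ↦ ρ g a, fun s g ↦ by simp⟩
  map_add' a b := by ext g; simp
  map_smul' c a := by ext g; simp
  isIntertwining' h := by
    ext a g
    change ρ g (ρ h a) = ρ (g * h) a
    simp

/-- The difference operator `Φ ↦ (g ↦ t⁻¹ Φ(t g) - Φ(g))` on `Coind_S^G M`. In terms of the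
`S`-invariant function `φ(g) = g⁻¹ Φ(g)` it is `φ ↦ (g ↦ φ(t g) - φ(g))`. -/
def coindDiff [S.Normal] (t : G) :
    (Representation.coind S.subtype (ρ.comp S.subtype)).IntertwiningMap
      (Representation.coind S.subtype (ρ.comp S.subtype)) where
  toFun Φ := ⟨fun g ↦ ρ t⁻¹ (Φ.1 (t * g)) - Φ.1 g, fun s g ↦ by
    have hs := Φ.2 s g
    have hconj := Φ.2 ⟨t * s * t⁻¹, ‹S.Normal›.conj_mem s s.2 t⟩ (t * g)
    simp only [Subgroup.coe_subtype, MonoidHom.comp_apply] at hs hconj ⊢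
    rw [show t * (s * g) = t * s * t⁻¹ * (t * g) by group, hconj, hs, map_sub]
    simp only [← Module.End.mul_apply, ← map_mul]
    congr 3
    group⟩
  map_add' Φ Ψ := by ext g; simp; abel
  map_smul' c Φ := by ext g; simp [smul_sub]
  isIntertwining' h := by
    ext Φ g
    change ρ t⁻¹ (Φ.1 (t * g * h)) - Φ.1 (g * h) = ρ t⁻¹ (Φ.1 (t * (g * h))) - Φ.1 (g * h)
    rw [mul_assoc]

@[simp]
lemma coindUnit_apply_coe (a : M) (g : G) : (coindUnit ρ S a).1 g = ρ g a := rfl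

@[simp]
lemma coindDiff_apply_coe [S.Normal] (t : G)
    (Φ : Representation.coindV S.subtype (ρ.comp S.subtype)) (g : G) :
    (coindDiff ρ S t Φ).1 g = ρ t⁻¹ (Φ.1 (t * g)) - Φ.1 g := rfl

lemma coindUnit_injective : Function.Injective (coindUnit ρ S) := fun a b h ↦ by
  simpa using congrFun (congrArg Subtype.val h) 1

lemma exact_coindUnit_coindDiff [S.Normal] {t : G} (hS : S ⊔ Subgroup.zpowers t = ⊤) :
    Function.Exact (coindUnit ρ S) (coindDiff ρ S t) := by
  refine fun Φ ↦ ⟨fun hΦ ↦ ?_, ?_⟩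
  · have ht : t ∈ equivarianceSubgroup ρ Φ.1 := fun g ↦ by
      have hg : ρ t⁻¹ (Φ.1 (t * g)) = Φ.1 g :=
        sub_eq_zero.1 (congrFun (congrArg Subtype.val hΦ) g)
      rw [← hg, ρ.self_inv_apply]
    have htop : equivarianceSubgroup ρ Φ.1 = ⊤ :=
      top_le_iff.1 (hS ▸ sup_le (fun s hs ↦ Φ.2 ⟨s, hs⟩) (Subgroup.zpowers_le_of_mem ht))
    refine ⟨Φ.1 1, Subtype.ext (funext fun g ↦ ?_)⟩
    have hg : g ∈ equivarianceSubgroup ρ Φ.1 := htop ▸ Subgroup.mem_top g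
    rw [coindUnit_apply_coe, ← hg, mul_one]
  · rintro ⟨a, rfl⟩
    ext g
    simp

variable {S} in
lemma coindV_apply_eq_of_mul_inv_mem (Φ : Representation.coindV S.subtype (ρ.comp S.subtype))
    {g h : G} (hgh : g * h⁻¹ ∈ S) : Φ.1 g = ρ (g * h⁻¹) (Φ.1 h) := by
  simpa using Φ.2 ⟨g * h⁻¹, hgh⟩ h

lemma coindDiff_ker_surjective (χ : G →* Multiplicative ℤ) {t : G}
    (ht : χ t = Multiplicative.ofAdd 1) : Function.Surjective (coindDiff ρ χ.ker t) := by
  intro Ψ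
  obtain ⟨U, hU⟩ := surjective_fwdDiff_one_int fun m : ℤ ↦ ρ (t ^ m)⁻¹ (Ψ.1 (t ^ m))
  refine ⟨⟨fun g ↦ ρ g (U (χ g).toAdd), fun s g ↦ ?_⟩, Subtype.ext (funext fun g ↦ ?_)⟩
  · simp [χ.mem_ker.1 s.2]
  · set m := (χ g).toAdd with hm
    have hker : g * (t ^ m)⁻¹ ∈ χ.ker := by
      simp [MonoidHom.mem_ker, ht, ← ofAdd_zsmul, hm]
    have hstep : (χ (t * g)).toAdd = m + 1 := by simp [ht, hm, add_comm]
    calc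
      ρ t⁻¹ (ρ (t * g) (U (χ (t * g)).toAdd)) - ρ g (U m) = ρ g (fwdDiff 1 U m) := by
        rw [hstep]
        simp [fwdDiff]
      _ = ρ (g * (t ^ m)⁻¹) (Ψ.1 (t ^ m)) := by simp [hU]
      _ = Ψ.1 g := (coindV_apply_eq_of_mul_inv_mem ρ Ψ hker).symm

end Coinduction

section CohomologicalDimension

/-- The group `G` has cohomological dimension at most `n` over the commutative ring `R`. -/
def HasCohomologicalDimensionLE (R G : Type u) [CommRing R] [Group G] (n : ℕ) : Prop :=
  ∀ (A : Rep.{u} R G) (k : ℕ), n < k → IsZero (groupCohomology A k)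

variable {R G : Type u} [CommRing R] [Group G]

/-- The complex `A ⟶ Coind_S^G A ⟶ Coind_S^G A` formed by the unit of coinduction and the
difference operator of `t`. -/
noncomputable def coindDiffComplex (A : Rep.{u} R G) (S : Subgroup G) [S.Normal] (t : G) :
    ShortComplex (Rep.{u} R G) where
  X₁ := A
  X₂ := Rep.coind S.subtype (Rep.of (A.ρ.comp S.subtype))
  X₃ := Rep.coind S.subtype (Rep.of (A.ρ.comp S.subtype))
  f := Rep.ofHom (coindUnit A.ρ S)
  g := Rep.ofHom (coindDiff A.ρ S t)
  zero := by
    ext a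
    simp

lemma coindDiffComplex_ker_shortExact (A : Rep.{u} R G) (χ : G →* Multiplicative ℤ) {t : G}
    (ht : χ t = Multiplicative.ofAdd 1) : (coindDiffComplex A χ.ker t).ShortExact where
  exact := (forget₂ (Rep.{u} R G) (ModuleCat R)).reflects_exact_of_faithful _ <|
    (ShortComplex.ShortExact.moduleCat_exact_iff_function_exact _).2 <|
      exact_coindUnit_coindDiff A.ρ χ.ker <|
        ker_sup_zpowers_eq_top χ (ht ▸ zpowers_ofAdd_one_eq_top)
  mono_f := (Rep.mono_iff_injective _).2 (coindUnit_injective A.ρ χ.ker)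
  epi_g := (Rep.epi_iff_surjective _).2 (coindDiff_ker_surjective A.ρ χ ht)

namespace HasCohomologicalDimensionLE

lemma zero_of_subsingleton [Subsingleton G] : HasCohomologicalDimensionLE R G 0
  | A, k + 1, _ => isZero_groupCohomology_succ_of_subsingleton A k

lemma succ_of_ker {n : ℕ} {χ : G →* Multiplicative ℤ} (hχ : Function.Surjective χ)
    (hker : HasCohomologicalDimensionLE R χ.ker n) :
    HasCohomologicalDimensionLE R G (n + 1)
  | A, k + 1, hk => by
    obtain ⟨t, ht⟩ := hχ (Multiplicative.ofAdd 1)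
    have hA := coindDiffComplex_ker_shortExact A χ ht
    have hcoind (j : ℕ) (hj : n < j) :
        IsZero (groupCohomology (coindDiffComplex A χ.ker t).X₂ j) :=
      (hker _ j hj).of_iso (groupCohomology.coindIso _ j)
    have : IsIso (groupCohomology.δ hA k (k + 1) rfl) :=
      groupCohomology.isIso_δ_of_isZero hA k (hcoind k (by lia)) (hcoind (k + 1) (by lia))
    exact (hcoind k (by lia)).of_iso (asIso (groupCohomology.δ hA k (k + 1) rfl)).symm

end HasCohomologicalDimensionLE

end CohomologicalDimension

/-- `G` is a poly-(infinite cyclic) group of Hirsch length `n`: it has a subnormal series of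
length `n` with all quotients isomorphic to `ℤ`. Each step of the series is encoded as the kernel
of a surjection onto `ℤ`. -/
inductive IsPolyInfiniteCyclic : ℕ → (G : Type u) → [Group G] → Prop
  | zero {G : Type u} [Group G] [Subsingleton G] : IsPolyInfiniteCyclic 0 G
  | succ {n : ℕ} {G : Type u} [Group G] {χ : G →* Multiplicative ℤ}
      (hχ : Function.Surjective χ) (hker : IsPolyInfiniteCyclic n χ.ker) :
      IsPolyInfiniteCyclic (n + 1) G

namespace IsPolyInfiniteCyclic

lemma hasCohomologicalDimensionLE (R : Type u) [CommRing R] {n : ℕ} {G : Type u} [Group G]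
    (hG : IsPolyInfiniteCyclic n G) : HasCohomologicalDimensionLE R G n := by
  induction hG with
  | zero => exact .zero_of_subsingleton
  | succ hχ _ ih => exact .succ_of_ker hχ ih

lemma of_mulEquiv {n : ℕ} {G H : Type u} [Group G] [Group H] (hG : IsPolyInfiniteCyclic n G)
    (e : G ≃* H) : IsPolyInfiniteCyclic n H := by
  induction hG generalizing H with
  | zero =>
    have := e.symm.toEquiv.subsingleton
    exact zero
  | @succ n G _ χ hχ _ ih =>
    have hker : χ.ker.map e.toMonoidHom = (χ.comp e.symm.toMonoidHom).ker :=
      (MonoidHom.ker_comp_mulEquiv χ e.symm).symm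
    exact succ (hχ.comp e.symm.surjective)
      (ih ((e.subgroupMap χ.ker).trans (MulEquiv.subgroupCongr hker)))

lemma succ_of_exact {n : ℕ} {N G : Type u} [Group N] [Group G] (hN : IsPolyInfiniteCyclic n N)
    {ι : N →* G} {χ : G →* Multiplicative ℤ} (hι : Function.Injective ι)
    (hιχ : ι.range = χ.ker) (hχ : Function.Surjective χ) : IsPolyInfiniteCyclic (n + 1) G :=
  succ hχ (hN.of_mulEquiv ((MonoidHom.ofInjective hι).trans (MulEquiv.subgroupCongr hιχ)))

lemma multiplicative_pi_int (n : ℕ) : IsPolyInfiniteCyclic n (Multiplicative (Fin n → ℤ)) := by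
  induction n with
  | zero =>
    have : Subsingleton (Multiplicative (Fin 0 → ℤ)) := inferInstanceAs (Subsingleton (Fin 0 → ℤ))
    exact zero
  | succ n ih =>
    let ι : (Fin n → ℤ) →+ (Fin (n + 1) → ℤ) :=
      { toFun := Matrix.vecCons 0
        map_zero' := Matrix.cons_zero_zero
        map_add' := fun v w ↦ by simp }
    let π : (Fin (n + 1) → ℤ) →+ ℤ := Pi.evalAddMonoidHom _ 0
    have hι : Function.Injective ι := Fin.cons_right_injective (α := fun _ ↦ ℤ) 0
    have hιπ : Function.Exact ι π := by
      refine fun v ↦ ⟨fun (hv : v 0 = 0) ↦ ⟨Fin.tail v, ?_⟩, ?_⟩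
      · calc
          ι (Fin.tail v) = Fin.cons (v 0) (Fin.tail v) := by rw [hv]; rfl
          _ = v := Fin.cons_self_tail v
      · rintro ⟨w, rfl⟩
        rfl
    exact ih.succ_of_exact (ι := ι.toMultiplicative) (χ := π.toMultiplicative) hι
      (SetLike.ext fun v ↦ (hιπ v).symm) (Function.surjective_eval 0)

end IsPolyInfiniteCyclic

theorem groupCohomology_zn_vanishes_above_rank_general {R G : Type u} [CommRing R] [Group G]
    {n : ℕ} (hG : IsPolyInfiniteCyclic n G) (A : Rep.{u} R G) {k : ℕ} (hk : n < k) :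
    Subsingleton (groupCohomology A k) :=
  ModuleCat.subsingleton_of_isZero (hG.hasCohomologicalDimensionLE R A k hk)

/-- For an abelian group `M` equipped with an action of `ℤⁿ` by group
automorphisms (formalized as a `ℤ`-linear representation of the free abelian group `ℤⁿ`,
written multiplicatively), the group cohomology `H^k(ℤⁿ, M)` vanishes for every `k > n`. -/
theorem groupCohomology_zn_vanishes_above_rank (n : ℕ) (M : Type) [AddCommGroup M]
    [Module ℤ M] (ρ : Representation ℤ (Multiplicative (Fin n → ℤ)) M)
    (k : ℕ) (hk : n < k) :
    Subsingleton (groupCohomology (Rep.of ρ) k) :=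
  groupCohomology_zn_vanishes_above_rank_general (.multiplicative_pi_int n) (Rep.of ρ) hk
end
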